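/- Fix a real number c with 0 < c < 1 and set ξ∧ = 1/c. Then ψ₂(t,ξ∧) ≥ 0 for all t ∈ [−1,1]; moreover, for every ξ > 0 such that ψ₂(t,ξ) ≥ 0 for all t ∈ [−1,1], one has ξ ≥ 1/c and sup over t ∈ [−1,1] of |ψ₂(t,ξ)| is at least sup over t ∈ [−1,1] of |ψ₂(t,ξ∧)|; i.e., ξ∧ = 1/c induces the optimal outer quadratic G⁰ approximant. -/

import Mathlib

/-- Simplified radial error of the quadratic G⁰ Bézier approximant of the unit circular arc. -/
noncomputable def psi2 (c t ξ : ℝ) : ℝ :=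
  (1/8) * (1 - t^2) * (2*(1 - t^2)*ξ^2 + 4*c*(1 + t^2)*ξ - 8 + 2*c^2*(1 - t^2))

/-- Sup over `t ∈ [−1,1]` of `|f t|`. -/
noncomputable def errSup (f : ℝ → ℝ) : ℝ :=
  sSup ((fun t => |f t|) '' Set.Icc (-1 : ℝ) 1)

/-! With `u = 1 - t ^ 2`, the error is `u * (c * ξ - 1 + u * ((ξ - c) / 2) ^ 2)`. Dividing by `u`
and letting `t` tend to `1` shows that the approximant is outer exactly when `1 ≤ c * ξ`. For fixed
`t` the error is a polynomial in `ξ` whose nonconstant coefficients are nonnegative, so among outer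
approximants the smallest `ξ` is the best one. -/

section

open Set

lemma one_sub_sq_nonneg_of_mem_Icc {t : ℝ} (ht : t ∈ Icc (-1 : ℝ) 1) : 0 ≤ 1 - t ^ 2 :=
  sub_nonneg.2 ((sq_le_one_iff_abs_le_one t).2 (abs_le.2 ht))

lemma errSup_mono {f g : ℝ → ℝ} (hg : BddAbove ((fun t => |g t|) '' Icc (-1 : ℝ) 1))
    (hfg : ∀ t ∈ Icc (-1 : ℝ) 1, |f t| ≤ |g t|) : errSup f ≤ errSup g := by
  refine csSup_le ((nonempty_Icc.2 (by norm_num)).image _) ?_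
  rintro _ ⟨t, ht, rfl⟩
  exact (hfg t ht).trans (le_csSup hg (mem_image_of_mem _ ht))

lemma psi2_eq (c t ξ : ℝ) :
    psi2 c t ξ = (1 - t ^ 2) * (c * ξ - 1 + (1 - t ^ 2) * ((ξ - c) / 2) ^ 2) := by
  unfold psi2
  ring

@[fun_prop]
lemma continuous_psi2 (c ξ : ℝ) : Continuous fun t => psi2 c t ξ := by
  unfold psi2
  fun_prop

lemma psi2_nonneg {c t ξ : ℝ} (ht : t ∈ Icc (-1 : ℝ) 1) (hξ : 1 ≤ c * ξ) : 0 ≤ psi2 c t ξ := by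
  have hu := one_sub_sq_nonneg_of_mem_Icc ht
  rw [psi2_eq]
  exact mul_nonneg hu (add_nonneg (sub_nonneg.2 hξ) (mul_nonneg hu (sq_nonneg _)))

lemma one_le_mul_of_forall_psi2_nonneg {c ξ : ℝ}
    (h : ∀ t ∈ Icc (-1 : ℝ) 1, 0 ≤ psi2 c t ξ) : 1 ≤ c * ξ := by
  have hIoo : ∀ t ∈ Ioo (-1 : ℝ) 1, 0 ≤ c * ξ - 1 + (1 - t ^ 2) * ((ξ - c) / 2) ^ 2 := by
    intro t ht
    have hu : 0 < 1 - t ^ 2 := sub_pos.2 ((sq_lt_one_iff_abs_lt_one t).2 (abs_lt.2 ht))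
    have hψ := h t (Ioo_subset_Icc_self ht)
    rw [psi2_eq] at hψ
    exact nonneg_of_mul_nonneg_right hψ hu
  have hmem : (1 : ℝ) ∈ closure (Ioo (-1) 1) := by
    rw [closure_Ioo (by norm_num)]
    exact right_mem_Icc.2 (by norm_num)
  have hone := le_on_closure hIoo continuousOn_const (by fun_prop) hmem
  linarith

lemma forall_psi2_nonneg_iff {c ξ : ℝ} :
    (∀ t ∈ Icc (-1 : ℝ) 1, 0 ≤ psi2 c t ξ) ↔ 1 ≤ c * ξ :=
  ⟨one_le_mul_of_forall_psi2_nonneg, fun hξ _ ht => psi2_nonneg ht hξ⟩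

lemma monotoneOn_psi2 {c t : ℝ} (hc : 0 ≤ c) (ht : t ∈ Icc (-1 : ℝ) 1) :
    MonotoneOn (psi2 c t) (Ici 0) := by
  intro ξ hξ η _ hξη
  have hu := one_sub_sq_nonneg_of_mem_Icc ht
  rw [mem_Ici] at hξ
  unfold psi2
  gcongr

lemma monotoneOn_errSup_psi2 {c : ℝ} (hc : 0 < c) :
    MonotoneOn (fun ξ => errSup fun t => psi2 c t ξ) (Ici (1 / c)) := by
  intro ξ hξ η hη hξη
  have hinv : 0 ≤ 1 / c := by positivity
  refine errSup_mono (isCompact_Icc.bddAbove_image (by fun_prop)) fun t ht => ?_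
  refine abs_le_abs_of_nonneg (psi2_nonneg ht ((div_le_iff₀' hc).1 hξ)) ?_
  exact monotoneOn_psi2 hc.le ht (hinv.trans hξ) (hinv.trans hη) hξη

theorem stmt_2_general {c : ℝ} (hc : 0 < c) :
    (∀ t ∈ Icc (-1 : ℝ) 1, 0 ≤ psi2 c t (1 / c)) ∧
    ∀ ξ : ℝ, (∀ t ∈ Icc (-1 : ℝ) 1, 0 ≤ psi2 c t ξ) →
      1 / c ≤ ξ ∧ errSup (fun t => psi2 c t (1 / c)) ≤ errSup (fun t => psi2 c t ξ) := by
  have outer_iff (ξ : ℝ) : (∀ t ∈ Icc (-1 : ℝ) 1, 0 ≤ psi2 c t ξ) ↔ 1 / c ≤ ξ :=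
    forall_psi2_nonneg_iff.trans (div_le_iff₀' hc).symm
  refine ⟨(outer_iff _).2 le_rfl, fun ξ h => ?_⟩
  have hξ := (outer_iff ξ).1 h
  exact ⟨hξ, monotoneOn_errSup_psi2 hc self_mem_Ici hξ hξ⟩

end

/-- `ξ∧ = 1/c` induces the optimal outer quadratic G⁰ approximant. -/
theorem stmt_2 (c : ℝ) (hc0 : 0 < c) (hc1 : c < 1) :
    (∀ t ∈ Set.Icc (-1 : ℝ) 1, 0 ≤ psi2 c t (1/c)) ∧
    ∀ ξ > (0 : ℝ), (∀ t ∈ Set.Icc (-1 : ℝ) 1, 0 ≤ psi2 c t ξ) →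
      1/c ≤ ξ ∧ errSup (fun t => psi2 c t (1/c)) ≤ errSup (fun t => psi2 c t ξ) :=
  ⟨(stmt_2_general hc0).1, fun ξ _ => (stmt_2_general hc0).2 ξ⟩
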